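/- Let u : ℝ^d → ℝ^d be continuous and x* ∈ ℝ^d be such that u(x*) = 0 and ⟨u(x), x − x*⟩ > 0 for all x ≠ x*. Let (γ_n)_{n≥1} be positive reals with γ_n → 0 and ∑_n γ_n = ∞, let (ε_n) be a sequence in ℝ^d with ε_n → 0, and let (x_n) be a sequence in ℝ^d contained in some compact subset of ℝ^d and satisfying the recursion x_{n+1} = x_n − γ_{n+1} u(x_n) + γ_{n+1} ε_n for all n. Then x_n → x* as n → ∞. -/

import Mathlib

open MeasureTheory ProbabilityTheory Filter Finset Classical
open scoped RealInnerProductSpace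

/-- A nonnegative real sequence tends to `0` if, away from `0`, it eventually decreases by at least
a fixed multiple of steps with divergent sum, and its upward jumps are asymptotically negligible. -/
theorem tendsto_zero_of_eventually_descent {V γ : ℕ → ℝ} (hV : ∀ n, 0 ≤ V n)
    (hγ : ∀ n, 0 ≤ γ n)
    (hγdiv : Tendsto (fun N => ∑ n ∈ Finset.range N, γ n) atTop atTop)
    (hdesc : ∀ η > 0, ∃ c > 0, ∀ᶠ n in atTop, η ≤ V n → V (n + 1) ≤ V n - c * γ (n + 1))
    (hjump : ∀ η > 0, ∀ᶠ n in atTop, V (n + 1) ≤ V n + η) :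
    Tendsto V atTop (nhds 0) := by
  rw [Metric.tendsto_atTop]
  intro r hr
  obtain ⟨c, hc, hdesc⟩ := hdesc (r / 3) (by positivity)
  obtain ⟨N, hN⟩ := eventually_atTop.1 (hdesc.and (hjump (r / 3) (by positivity)))
  obtain ⟨m, hm, hVm⟩ : ∃ m ≥ N, V m < r / 3 := by
    by_contra! hlarge
    have hsum : ∀ k ≥ N, V k + c * ∑ n ∈ Finset.range (k + 1), γ n
        ≤ V N + c * ∑ n ∈ Finset.range (N + 1), γ n := by
      intro k hk
      induction k, hk using Nat.le_induction with
      | base => exact le_rfl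
      | succ k hk ih =>
        have := (hN k hk).1 (hlarge k hk)
        rw [Finset.sum_range_succ _ (k + 1), mul_add]
        linarith
    obtain ⟨k, hk, hkN⟩ := (((hγdiv.const_mul_atTop hc).eventually_gt_atTop
      (V N + c * ∑ n ∈ Finset.range (N + 1), γ n)).and (eventually_ge_atTop N)).exists
    have hle := hsum k hkN
    rw [Finset.sum_range_succ _ k, mul_add] at hle
    linarith [hV k, mul_nonneg hc.le (hγ k)]
  refine ⟨m, fun n hn => ?_⟩
  have hbound : V n ≤ 2 * (r / 3) := by
    induction n, hn using Nat.le_induction with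
    | base => linarith
    | succ n hn ih =>
      obtain ⟨hd, hj⟩ := hN n (hm.trans hn)
      rcases lt_or_ge (V n) (r / 3) with h | h
      · linarith
      · linarith [hd h, mul_nonneg hc.le (hγ (n + 1))]
  rw [Real.dist_0_eq_abs, abs_of_nonneg (hV n)]
  linarith

/-- One-step bound on the squared norm under a perturbed step. -/
theorem norm_sub_smul_add_smul_sq_le {E : Type*} [NormedAddCommGroup E] [InnerProductSpace ℝ E]
    {y v e : E} {t M B : ℝ} (ht : 0 ≤ t) (hy : ‖y‖ ≤ M) (hv : ‖v‖ ≤ B) :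
    ‖y - t • v + t • e‖ ^ 2
      ≤ ‖y‖ ^ 2 - 2 * t * ⟪v, y⟫ + t * (2 * (‖e‖ * M) + t * (‖e‖ + B) ^ 2) := by
  have hexp : ‖y - t • v + t • e‖ ^ 2
      = ‖y‖ ^ 2 - 2 * t * ⟪v, y⟫ + t * (2 * ⟪e, y⟫ + t * ‖e - v‖ ^ 2) := by
    rw [show y - t • v + t • e = y + t • (e - v) by rw [smul_sub]; abel, norm_add_sq_real,
      norm_smul, mul_pow, Real.norm_eq_abs, sq_abs, real_inner_smul_right, inner_sub_right,
      real_inner_comm y e, real_inner_comm y v]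
    ring
  have hinner : ⟪e, y⟫ ≤ ‖e‖ * M := (real_inner_le_norm e y).trans (by gcongr)
  have hnorm : ‖e - v‖ ≤ ‖e‖ + B := (norm_sub_le e v).trans (by gcongr)
  rw [hexp]
  gcongr

/-- **Lemma (deterministic convergence of a perturbed gradient-type recursion).**
If `u` is continuous with `u x* = 0` and `⟪u x, x - x*⟫ > 0` for `x ≠ x*`, the positive
steps satisfy `γ_n → 0` and `∑ γ_n = ∞`, the perturbations satisfy `ε_n → 0`, and the
sequence `x_{n+1} = x_n - γ_{n+1} u(x_n) + γ_{n+1} ε_n` stays in a compact set,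
then `x_n → x*`. -/
theorem perturbed_recursion_tendsto_root
    {d : ℕ}
    (u : EuclideanSpace ℝ (Fin d) → EuclideanSpace ℝ (Fin d)) (hucont : Continuous u)
    (xstar : EuclideanSpace ℝ (Fin d)) (hroot : u xstar = 0)
    (hmono : ∀ x, x ≠ xstar → 0 < ⟪u x, x - xstar⟫)
    (γ : ℕ → ℝ) (hγpos : ∀ n, 0 < γ n)
    (hγ0 : Tendsto γ atTop (nhds 0))
    (hγdiv : Tendsto (fun N => ∑ n ∈ Finset.range N, γ n) atTop atTop)
    (ε : ℕ → EuclideanSpace ℝ (Fin d)) (hε : Tendsto ε atTop (nhds 0))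
    (x : ℕ → EuclideanSpace ℝ (Fin d))
    (C : Set (EuclideanSpace ℝ (Fin d))) (hC : IsCompact C) (hxC : ∀ n, x n ∈ C)
    (hrec : ∀ n, x (n + 1) = x n - γ (n + 1) • u (x n) + γ (n + 1) • ε n) :
    Tendsto x atTop (nhds xstar) := by
  have hinner_nonneg : ∀ y, 0 ≤ ⟪u y, y - xstar⟫ := fun y => by
    rcases eq_or_ne y xstar with rfl | hy
    · simp
    · exact (hmono y hy).le
  obtain ⟨M, hM⟩ := hC.exists_bound_of_continuousOn
    (f := fun y => y - xstar) (by fun_prop)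
  obtain ⟨B, hB⟩ := hC.exists_bound_of_continuousOn hucont.continuousOn
  have hγ1 : Tendsto (fun n => γ (n + 1)) atTop (nhds 0) := (tendsto_add_atTop_iff_nat 1).2 hγ0
  set δ : ℕ → ℝ := fun n => 2 * (‖ε n‖ * M) + γ (n + 1) * (‖ε n‖ + B) ^ 2
  have hδ : Tendsto δ atTop (nhds 0) := by
    simpa using ((hε.norm.mul_const M).const_mul 2).add
      (hγ1.mul ((hε.norm.add_const B).pow 2))
  have hstep : ∀ n, ‖x (n + 1) - xstar‖ ^ 2
      ≤ ‖x n - xstar‖ ^ 2 - 2 * γ (n + 1) * ⟪u (x n), x n - xstar⟫ + γ (n + 1) * δ n := by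
    intro n
    rw [show x (n + 1) - xstar = (x n - xstar) - γ (n + 1) • u (x n) + γ (n + 1) • ε n by
      rw [hrec n]; abel]
    exact norm_sub_smul_add_smul_sq_le (hγpos _).le (hM _ (hxC n)) (hB _ (hxC n))
  have hsq : Tendsto (fun n => ‖x n - xstar‖ ^ 2) atTop (nhds 0) := by
    refine tendsto_zero_of_eventually_descent (fun n => by positivity) (fun n => (hγpos n).le)
      hγdiv (fun η hη => ?_) (fun η hη => ?_)
    · have hK : IsCompact (C ∩ {y | η ≤ ‖y - xstar‖ ^ 2}) :=
        hC.inter_right (isClosed_le continuous_const (by fun_prop))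
      obtain ⟨c, hc, hcK⟩ := hK.exists_forall_le' (f := fun y => ⟪u y, y - xstar⟫) (a := 0)
        (by fun_prop) (fun y hy => hmono y (by
          rintro rfl
          have := hy.2
          simp at this
          linarith))
      refine ⟨c, hc, ?_⟩
      filter_upwards [hδ.eventually_le_const hc] with n hn hηn
      nlinarith [hstep n, mul_le_mul_of_nonneg_left hn (hγpos (n + 1)).le,
        mul_le_mul_of_nonneg_left (hcK _ ⟨hxC n, hηn⟩) (hγpos (n + 1)).le]
    · have hprod : Tendsto (fun n => γ (n + 1) * δ n) atTop (nhds 0) := by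
        simpa using hγ1.mul hδ
      filter_upwards [hprod.eventually_le_const hη] with n hn
      linarith [hstep n, mul_nonneg (hγpos (n + 1)).le (hinner_nonneg (x n))]
  rw [tendsto_iff_norm_sub_tendsto_zero]
  simpa using hsq.sqrt
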